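/- arXiv:1301.0699 — 2 statements merged into one kernel-verified Lean document; each statement's English description precedes it below -/
import Mathlib

section
/- Let p, q > 1 and a ≥ 1. Then arcsin_{p,q} is (a,a)-convex on (0,1): for all r, s ∈ (0,1), arcsin_{p,q}(((r^a + s^a)/2)^{1/a}) ≤ ((arcsin_{p,q}(r)^a + arcsin_{p,q}(s)^a)/2)^{1/a}. -/
open Real Set

/-- `arcsinPQ p q x = ∫₀ˣ (1 - tᵠ)^(-1/p) dt`, the generalized inverse sine. -/
noncomputable def arcsinPQ (p q x : ℝ) : ℝ := ∫ t in (0:ℝ)..x, (1 - t ^ q) ^ (-(1/p))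

/-!
Since `t ↦ (1 - t ^ q) ^ (-(1/p))` is increasing, `arcsinPQ p q` is convex, and it vanishes at `0`.
By Hölder's inequality the power mean `M` of exponent `a ≥ 1` is supported at each point `x` by a
linear functional `y ↦ ∑ cᵢ yᵢ` with `cᵢ ≥ 0`: it equals `M x` at `x` and is at most `M y` for every
`y ≥ 0`. At `y = 1` this gives `∑ cᵢ ≤ 1`, so Jensen's inequality for a convex `f` with `f 0 ≤ 0`
yields `f (M x) = f (∑ cᵢ xᵢ) ≤ ∑ cᵢ f xᵢ ≤ M (f ∘ x)`.
-/

theorem monotoneOn_one_sub_rpow_rpow {q c : ℝ} (hq : 0 < q) (hc : c ≤ 0) :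
    MonotoneOn (fun t : ℝ ↦ (1 - t ^ q) ^ c) (Ico 0 1) := by
  intro x hx y hy hxy
  have hy_lt : y ^ q < 1 := rpow_lt_one hy.1 hy.2 hq
  have hxy_le : x ^ q ≤ y ^ q := rpow_le_rpow hx.1 hxy hq.le
  exact rpow_le_rpow_of_nonpos (sub_pos.2 hy_lt) (sub_le_sub_left hxy_le 1) hc

section Primitive

variable {g : ℝ → ℝ} {S : Set ℝ} {b x y : ℝ}

theorem integral_le_mul_sub_of_monotoneOn (hg : MonotoneOn g (uIcc x y)) :
    ∫ t in x..y, g t ≤ g y * (y - x) := by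
  have hint : IntervalIntegrable g MeasureTheory.volume x y := hg.intervalIntegrable
  have hconst : ∫ _ in x..y, g y = g y * (y - x) := by
    rw [intervalIntegral.integral_const, smul_eq_mul, mul_comm]
  rw [← hconst]
  rcases le_total x y with hxy | hyx
  · exact intervalIntegral.integral_mono_on hxy hint intervalIntegrable_const fun t ht ↦
      hg (uIcc_of_le hxy ▸ ht) right_mem_uIcc ht.2
  · rw [intervalIntegral.integral_symm y x, intervalIntegral.integral_symm y x, neg_le_neg_iff]
    exact intervalIntegral.integral_mono_on hyx intervalIntegrable_const hint.symm fun t ht ↦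
      hg right_mem_uIcc (uIcc_of_ge hyx ▸ ht) ht.1

theorem integral_sub_integral_le_of_monotoneOn (hS : S.OrdConnected) (hg : MonotoneOn g S)
    (hb : b ∈ S) (hx : x ∈ S) (hy : y ∈ S) :
    (∫ t in b..y, g t) - ∫ t in b..x, g t ≤ g y * (y - x) := by
  have hg_uIcc {u v : ℝ} (hu : u ∈ S) (hv : v ∈ S) : MonotoneOn g (uIcc u v) :=
    hg.mono (hS.uIcc_subset hu hv)
  rw [intervalIntegral.integral_interval_sub_left (hg_uIcc hb hy).intervalIntegrable
    (hg_uIcc hb hx).intervalIntegrable]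
  exact integral_le_mul_sub_of_monotoneOn (hg_uIcc hx hy)

theorem convexOn_integral_of_monotoneOn (hS : S.OrdConnected) (hg : MonotoneOn g S) (hb : b ∈ S) :
    ConvexOn ℝ S fun x ↦ ∫ t in b..x, g t := by
  refine ⟨hS.convex, fun x hx y hy u v hu hv huv ↦ ?_⟩
  have hm : u • x + v • y ∈ S := hS.convex hx hy hu hv huv
  have htangent_x := integral_sub_integral_le_of_monotoneOn hS hg hb hx hm
  have htangent_y := integral_sub_integral_le_of_monotoneOn hS hg hb hy hm
  simp only [smul_eq_mul] at htangent_x htangent_y ⊢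
  obtain rfl : v = 1 - u := by linarith
  linear_combination u * htangent_x + (1 - u) * htangent_y

end Primitive

theorem convexOn_map_sum_le_of_sum_le_one {𝕜 E β ι : Type*} [Field 𝕜] [LinearOrder 𝕜]
    [IsStrictOrderedRing 𝕜] [AddCommGroup E] [Module 𝕜 E] [AddCommGroup β] [PartialOrder β]
    [IsOrderedAddMonoid β] [Module 𝕜 β] [IsStrictOrderedModule 𝕜 β] {S : Set E} {f : E → β}
    {s : Finset ι} {c : ι → 𝕜} {x : ι → E} (hf : ConvexOn 𝕜 S f) (h0 : 0 ∈ S) (hf0 : f 0 ≤ 0)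
    (hc : ∀ i ∈ s, 0 ≤ c i) (hc1 : ∑ i ∈ s, c i ≤ 1) (hx : ∀ i ∈ s, x i ∈ S) :
    f (∑ i ∈ s, c i • x i) ≤ ∑ i ∈ s, c i • f (x i) := by
  have hv : 0 ≤ 1 - ∑ i ∈ s, c i := sub_nonneg.2 hc1
  have hjensen := hf.map_add_sum_le hc (sub_add_cancel 1 _) hx hv h0
  rw [smul_zero, zero_add] at hjensen
  exact hjensen.trans (add_le_of_nonpos_left (smul_nonpos_of_nonneg_of_nonpos hv hf0))

section PowerMean

variable {ι : Type*} {s : Finset ι} {w x y : ι → ℝ} {a : ℝ}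

/-- The power mean `M_a` of the family `x` over `s`, for arbitrary weights `w`; the mean `M_a(x, y)`
of two numbers is the case of two indices of weight `1/2`. -/
noncomputable def powerMean (s : Finset ι) (w : ι → ℝ) (a : ℝ) (x : ι → ℝ) : ℝ :=
  (∑ i ∈ s, w i * x i ^ a) ^ (1/a)

theorem powerMean_one_le_one (ha : 0 ≤ a) (hw : ∀ i ∈ s, 0 ≤ w i) (hw1 : ∑ i ∈ s, w i ≤ 1) :
    powerMean s w a (fun _ ↦ 1) ≤ 1 := by
  simp only [powerMean, one_rpow, mul_one]
  exact rpow_le_one (Finset.sum_nonneg hw) hw1 (by positivity)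

theorem sum_mul_rpow_sub_one_mul_le (ha : 1 ≤ a) (hw : ∀ i ∈ s, 0 ≤ w i) (hx : ∀ i ∈ s, 0 ≤ x i)
    (hy : ∀ i ∈ s, 0 ≤ y i) :
    ∑ i ∈ s, w i * x i ^ (a - 1) * y i ≤
      (∑ i ∈ s, w i * x i ^ a) ^ (1 - 1/a) * powerMean s w a y := by
  rcases ha.eq_or_lt with rfl | ha
  · simp [powerMean]
  have hconj : a.conjExponent.HolderConjugate a := (HolderConjugate.conjExponent ha).symm
  set b := a.conjExponent
  have hb_inv : 1/b = 1 - 1/a := by simpa using hconj.symm.one_sub_inv.symm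
  have hab : (a - 1) * b = a := hconj.symm.sub_one_mul_conj
  calc ∑ i ∈ s, w i * x i ^ (a - 1) * y i
      = ∑ i ∈ s, (w i ^ (1/b) * x i ^ (a - 1)) * (w i ^ (1/a) * y i) := by
        refine Finset.sum_congr rfl fun i hi ↦ ?_
        have hwi : w i ^ (1/b) * w i ^ (1/a) = w i := by
          rw [← rpow_add' (hw i hi) (by simp [hb_inv]), hb_inv, sub_add_cancel, rpow_one]
        nth_rw 1 [← hwi]
        ring
    _ ≤ (∑ i ∈ s, (w i ^ (1/b) * x i ^ (a - 1)) ^ b) ^ (1/b) *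
          (∑ i ∈ s, (w i ^ (1/a) * y i) ^ a) ^ (1/a) :=
        inner_le_Lp_mul_Lq_of_nonneg s hconj
          (fun i hi ↦ mul_nonneg (rpow_nonneg (hw i hi) _) (rpow_nonneg (hx i hi) _))
          (fun i hi ↦ mul_nonneg (rpow_nonneg (hw i hi) _) (hy i hi))
    _ = (∑ i ∈ s, w i * x i ^ a) ^ (1 - 1/a) * powerMean s w a y := by
        rw [powerMean, ← hb_inv]
        congr 2 <;> refine Finset.sum_congr rfl fun i hi ↦ ?_
        · rw [mul_rpow (rpow_nonneg (hw i hi) _) (rpow_nonneg (hx i hi) _), one_div,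
            rpow_inv_rpow (hw i hi) hconj.ne_zero, ← rpow_mul (hx i hi), hab]
        · rw [mul_rpow (rpow_nonneg (hw i hi) _) (hy i hi), one_div,
            rpow_inv_rpow (hw i hi) hconj.symm.ne_zero]

theorem exists_sum_mul_eq_powerMean_and_forall_le (ha : 1 ≤ a) (hw : ∀ i ∈ s, 0 ≤ w i)
    (hx : ∀ i ∈ s, 0 ≤ x i) :
    ∃ c : ι → ℝ, (∀ i ∈ s, 0 ≤ c i) ∧ ∑ i ∈ s, c i * x i = powerMean s w a x ∧
      ∀ y : ι → ℝ, (∀ i ∈ s, 0 ≤ y i) → ∑ i ∈ s, c i * y i ≤ powerMean s w a y := by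
  have ha0 : a ≠ 0 := by positivity
  set A := ∑ i ∈ s, w i * x i ^ a
  have hA : 0 ≤ A := Finset.sum_nonneg fun i hi ↦ mul_nonneg (hw i hi) (rpow_nonneg (hx i hi) a)
  have hsum (y : ι → ℝ) : ∑ i ∈ s, w i * x i ^ (a - 1) / A ^ (1 - 1/a) * y i =
      (∑ i ∈ s, w i * x i ^ (a - 1) * y i) / A ^ (1 - 1/a) := by
    rw [Finset.sum_div]
    exact Finset.sum_congr rfl fun i _ ↦ by ring
  -- If `A = 0` and `1 < a`, then `x / 0 = 0` makes this the zero functional, as it should be.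
  refine ⟨fun i ↦ w i * x i ^ (a - 1) / A ^ (1 - 1/a), fun i hi ↦ ?_, ?_, fun y hy ↦ ?_⟩
  · exact div_nonneg (mul_nonneg (hw i hi) (rpow_nonneg (hx i hi) _)) (rpow_nonneg hA _)
  · have hself : ∑ i ∈ s, w i * x i ^ (a - 1) * x i = A :=
      Finset.sum_congr rfl fun i hi ↦ by
        rw [mul_assoc, ← rpow_add_one' (hx i hi) (by simpa using ha0), sub_add_cancel]
    have hdiv : A ^ (1 - (1 - 1/a)) = A / A ^ (1 - 1/a) := by
      rw [rpow_sub' hA (by simpa using ha0), rpow_one]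
    rw [hsum, hself, ← hdiv, sub_sub_cancel, powerMean]
  · have hpow : 0 ≤ powerMean s w a y :=
      rpow_nonneg (Finset.sum_nonneg fun i hi ↦ mul_nonneg (hw i hi) (rpow_nonneg (hy i hi) a)) _
    rw [hsum]
    exact div_le_of_le_mul₀ (rpow_nonneg hA _) hpow
      ((sum_mul_rpow_sub_one_mul_le ha hw hx hy).trans_eq (mul_comm _ _))

theorem convexOn_map_powerMean_le {S : Set ℝ} {f : ℝ → ℝ} (hf : ConvexOn ℝ S f) (h0 : 0 ∈ S)
    (hf0 : f 0 ≤ 0) (ha : 1 ≤ a) (hw : ∀ i ∈ s, 0 ≤ w i) (hw1 : ∑ i ∈ s, w i ≤ 1)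
    (hxS : ∀ i ∈ s, x i ∈ S) (hx : ∀ i ∈ s, 0 ≤ x i) (hfx : ∀ i ∈ s, 0 ≤ f (x i)) :
    f (powerMean s w a x) ≤ powerMean s w a (f ∘ x) := by
  obtain ⟨c, hc, hcx, hc_le⟩ := exists_sum_mul_eq_powerMean_and_forall_le ha hw hx
  have hc1 : ∑ i ∈ s, c i ≤ 1 := by
    simpa only [mul_one] using (hc_le (fun _ ↦ 1) fun _ _ ↦ zero_le_one).trans
      (powerMean_one_le_one (by positivity) hw hw1)
  calc f (powerMean s w a x) = f (∑ i ∈ s, c i • x i) := by simp only [smul_eq_mul, hcx]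
    _ ≤ ∑ i ∈ s, c i • f (x i) := convexOn_map_sum_le_of_sum_le_one hf h0 hf0 hc hc1 hxS
    _ ≤ powerMean s w a (f ∘ x) := hc_le (f ∘ x) hfx

end PowerMean

section ArcsinPQ

variable {p q : ℝ}

theorem arcsinPQ_zero : arcsinPQ p q 0 = 0 :=
  intervalIntegral.integral_same

theorem arcsinPQ_nonneg {x : ℝ} (hq : 0 ≤ q) (hx : x ∈ Icc 0 1) : 0 ≤ arcsinPQ p q x :=
  intervalIntegral.integral_nonneg hx.1 fun _ ht ↦
    rpow_nonneg (sub_nonneg.2 (rpow_le_one ht.1 (ht.2.trans hx.2) hq)) _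

theorem convexOn_arcsinPQ (hp : 0 < p) (hq : 0 < q) : ConvexOn ℝ (Ico 0 1) (arcsinPQ p q) :=
  convexOn_integral_of_monotoneOn ordConnected_Ico
    (monotoneOn_one_sub_rpow_rpow hq (by simpa using hp.le)) (left_mem_Ico.2 one_pos)

theorem arcsinPQ_aa_convex_general {ι : Type*} {s : Finset ι} {w x : ι → ℝ} {a : ℝ} (hp : 0 < p)
    (hq : 0 < q) (ha : 1 ≤ a) (hw : ∀ i ∈ s, 0 ≤ w i) (hw1 : ∑ i ∈ s, w i ≤ 1)
    (hx : ∀ i ∈ s, x i ∈ Ico 0 1) :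
    arcsinPQ p q (powerMean s w a x) ≤ powerMean s w a (arcsinPQ p q ∘ x) :=
  convexOn_map_powerMean_le (convexOn_arcsinPQ hp hq) (left_mem_Ico.2 one_pos) arcsinPQ_zero.le ha
    hw hw1 hx (fun i hi ↦ (hx i hi).1)
    fun i hi ↦ arcsinPQ_nonneg hq.le (Ico_subset_Icc_self (hx i hi))

end ArcsinPQ

theorem arcsinPQ_aa_convex (p q a : ℝ) (hp : 1 < p) (hq : 1 < q) (ha : 1 ≤ a)
    (r s : ℝ) (hr : r ∈ Set.Ioo (0:ℝ) 1) (hs : s ∈ Set.Ioo (0:ℝ) 1) :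
    arcsinPQ p q (((r ^ a + s ^ a) / 2) ^ (1/a)) ≤
      ((arcsinPQ p q r ^ a + arcsinPQ p q s ^ a) / 2) ^ (1/a) := by
  have hrs : ∀ i ∈ Finset.univ, ![r, s] i ∈ Ico (0 : ℝ) 1 := by
    simp [Fin.forall_fin_two, hr.1.le, hr.2, hs.1.le, hs.2]
  have hmean := arcsinPQ_aa_convex_general (w := fun _ ↦ 1/2) (one_pos.trans hp) (one_pos.trans hq)
    ha (by simp) (by simp) hrs
  simpa [powerMean, Fin.sum_univ_two, ← mul_add, div_eq_inv_mul] using hmean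
end

section
/- Let p, q > 1. Then for all r, s ∈ (0,1), π_{p,q}/2 − arccos_{p,q}(√(rs)) ≤ √((π_{p,q}/2 − arccos_{p,q}(r)) · (π_{p,q}/2 − arccos_{p,q}(s))), i.e. the function x ↦ π_{p,q}/2 − arccos_{p,q}(x) is geometrically convex on (0,1). -/
open Real Set

/-- `arccosPQ p q x = arcsinPQ p q ((1 - x^p)^(1/q))`. -/
noncomputable def arccosPQ (p q x : ℝ) : ℝ := arcsinPQ p q ((1 - x ^ p) ^ (1/q))

/-!
Put `F x = π_{p,q} / 2 - arccos_{p,q} x`, so that `F 0 = 0`. The derivative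
`(1 - t ^ q) ^ (-(1 / p))` of `arcsin_{p,q}` equals `1 / x` at `t = (1 - x ^ p) ^ (1 / q)`, so the
chain rule gives `F' x = (p / q) * x ^ (p - 2) * (1 - x ^ p) ^ (1 / q - 1)`. Powers of `x` are
geometrically affine, and `(1 - u) * (1 - v) ≤ (1 - √(u * v)) ^ 2` by AM-GM, so `F'` is
geometrically convex because `1 / q - 1 ≤ 0`. Geometric convexity passes from `F'` to `F` (Montel):
rescale the integrals to `[0, 1]` and apply the Cauchy–Schwarz inequality.
-/

open MeasureTheory

/-- Geometric (multiplicative) midpoint convexity of a nonnegative function `f` on a set `s` of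
nonnegative reals. The usual inequality `f √(x * y) ≤ √(f x * f y)` is squared, which makes the
notion stable under products without sign conditions. -/
def GeomConvexOn (s : Set ℝ) (f : ℝ → ℝ) : Prop :=
  ∀ ⦃x⦄, x ∈ s → ∀ ⦃y⦄, y ∈ s → f √(x * y) ^ 2 ≤ f x * f y

namespace GeomConvexOn

variable {s t : Set ℝ} {f g : ℝ → ℝ}

theorem const (c : ℝ) : GeomConvexOn s fun _ => c :=
  fun _ _ _ _ => (sq c).le

theorem mono (hf : GeomConvexOn t f) (hst : s ⊆ t) : GeomConvexOn s f :=
  fun _ hx _ hy => hf (hst hx) (hst hy)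

theorem mul (hf : GeomConvexOn s f) (hg : GeomConvexOn s g) :
    GeomConvexOn s fun x => f x * g x := fun x hx y hy =>
  calc (f √(x * y) * g √(x * y)) ^ 2
      = f √(x * y) ^ 2 * g √(x * y) ^ 2 := mul_pow _ _ _
    _ ≤ (f x * f y) * (g x * g y) :=
        mul_le_mul (hf hx hy) (hg hx hy) (sq_nonneg _) ((sq_nonneg _).trans (hf hx hy))
    _ = f x * g x * (f y * g y) := mul_mul_mul_comm _ _ _ _

end GeomConvexOn

theorem sqrt_mul_rpow {x y : ℝ} (hx : 0 ≤ x) (hy : 0 ≤ y) (a : ℝ) :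
    √(x * y) ^ a = √(x ^ a * y ^ a) := by
  rw [← mul_rpow hx hy, sqrt_eq_rpow, sqrt_eq_rpow, ← rpow_mul (mul_nonneg hx hy),
    ← rpow_mul (mul_nonneg hx hy), mul_comm a]

theorem sqrt_mul_mem_Ioo_zero {b x y : ℝ} (hx : x ∈ Ioo 0 b) (hy : y ∈ Ioo 0 b) :
    √(x * y) ∈ Ioo 0 b := by
  refine ⟨sqrt_pos.2 (mul_pos hx.1 hy.1), (sqrt_lt' (hx.1.trans hx.2)).2 ?_⟩
  rw [sq]
  exact mul_lt_mul'' hx.2 hy.2 hx.1.le hy.1.le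

theorem geomConvexOn_rpow (a : ℝ) : GeomConvexOn (Ici 0) fun x => x ^ a := by
  intro x hx y hy
  have hprod : 0 ≤ x ^ a * y ^ a := mul_nonneg (rpow_nonneg hx a) (rpow_nonneg hy a)
  simp only [sqrt_mul_rpow hx hy, sq_sqrt hprod, le_refl]

theorem GeomConvexOn.comp_rpow {s t : Set ℝ} {f : ℝ → ℝ} {a : ℝ} (hf : GeomConvexOn t f)
    (hs : s ⊆ Ici 0) (hst : MapsTo (· ^ a) s t) : GeomConvexOn s fun x => f (x ^ a) := by
  intro x hx y hy
  simpa only [sqrt_mul_rpow (hs hx) (hs hy)] using hf (hst hx) (hst hy)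

theorem geomConvexOn_one_sub_rpow_of_nonpos {e : ℝ} (he : e ≤ 0) :
    GeomConvexOn (Ioo 0 1) fun u => (1 - u) ^ e := by
  intro u hu v hv
  have hu' : 0 < 1 - u := sub_pos.2 hu.2
  have hv' : 0 < 1 - v := sub_pos.2 hv.2
  have hsq : √(u * v) ^ 2 = u * v := sq_sqrt (mul_nonneg hu.1.le hv.1.le)
  have hm : 0 ≤ 1 - √(u * v) := sub_nonneg.2 (sqrt_mul_mem_Ioo_zero hu hv).2.le
  have am_gm : 2 * √(u * v) ≤ u + v :=
    le_of_sq_le_sq (by nlinarith [sq_nonneg (u - v)]) (add_nonneg hu.1.le hv.1.le)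
  calc ((1 - √(u * v)) ^ e) ^ 2
      = ((1 - √(u * v)) ^ 2) ^ e := by rw [sq, sq, mul_rpow hm hm]
    _ ≤ ((1 - u) * (1 - v)) ^ e :=
        rpow_le_rpow_of_nonpos (mul_pos hu' hv') (by linarith) he
    _ = (1 - u) ^ e * (1 - v) ^ e := mul_rpow hu'.le hv'.le

theorem quadratic_nonneg_of_sq_le_mul {a b c : ℝ} (ha : 0 ≤ a) (hc : 0 ≤ c) (h : b ^ 2 ≤ a * c)
    (t : ℝ) : 0 ≤ a * (t * t) + 2 * b * t + c := by
  have hsum : 0 ≤ a * (t * t) + c := add_nonneg (mul_nonneg ha (mul_self_nonneg t)) hc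
  have hsq : (2 * b * t) ^ 2 ≤ (a * (t * t) + c) ^ 2 :=
    calc (2 * b * t) ^ 2 = 4 * t ^ 2 * b ^ 2 := by ring
      _ ≤ 4 * t ^ 2 * (a * c) := mul_le_mul_of_nonneg_left h (by positivity)
      _ = 4 * (a * (t * t)) * c := by ring
      _ ≤ (a * (t * t) + c) ^ 2 := four_mul_le_sq_add _ _
  linarith [(abs_le.1 (abs_le_of_sq_le_sq hsq hsum)).1]

theorem sq_integral_le_of_sq_le_mul {α : Type*} [MeasurableSpace α] {μ : Measure α}
    {f g h : α → ℝ} (hf : Integrable f μ) (hg : Integrable g μ) (hf₀ : 0 ≤ᵐ[μ] f)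
    (hg₀ : 0 ≤ᵐ[μ] g) (hle : ∀ᵐ a ∂μ, h a ^ 2 ≤ f a * g a) :
    (∫ a, h a ∂μ) ^ 2 ≤ (∫ a, f a ∂μ) * ∫ a, g a ∂μ := by
  by_cases hh : Integrable h μ
  · have hquadratic (t : ℝ) :
        0 ≤ (∫ a, f a ∂μ) * (t * t) + (2 * ∫ a, h a ∂μ) * t + ∫ a, g a ∂μ := by
      have hint : ∫ a, (f a * (t * t) + 2 * h a * t + g a) ∂μ =
          (∫ a, f a ∂μ) * (t * t) + (2 * ∫ a, h a ∂μ) * t + ∫ a, g a ∂μ := by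
        rw [integral_add (by fun_prop) hg, integral_add (by fun_prop) (by fun_prop),
          integral_mul_const, integral_mul_const, integral_const_mul]
      rw [← hint]
      refine integral_nonneg_of_ae ?_
      filter_upwards [hf₀, hg₀, hle] with a hfa hga hha
      exact quadratic_nonneg_of_sq_le_mul hfa hga hha t
    have hdiscrim := discrim_le_zero hquadratic
    rw [discrim] at hdiscrim
    linarith
  · rw [integral_undef hh, zero_pow two_ne_zero]
    exact mul_nonneg (integral_nonneg_of_ae hf₀) (integral_nonneg_of_ae hg₀)

theorem GeomConvexOn.integral {f : ℝ → ℝ} {b : ℝ} (hf : GeomConvexOn (Ioo 0 b) f)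
    (hf₀ : ∀ x ∈ Ioo 0 b, 0 ≤ f x) (hint : ∀ x ∈ Ioo 0 b, IntervalIntegrable f volume 0 x) :
    GeomConvexOn (Ioo 0 b) fun x => ∫ t in 0..x, f t := by
  have rescale (x : ℝ) : ∫ t in 0..x, f t = x * ∫ w in Ioc 0 1, f (x * w) := by
    rw [← intervalIntegral.integral_of_le zero_le_one,
      intervalIntegral.mul_integral_comp_mul_left, mul_zero, mul_one]
  have mul_mem {x w : ℝ} (hx : x ∈ Ioo 0 b) (hw : w ∈ Ioc 0 1) : x * w ∈ Ioo 0 b :=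
    ⟨mul_pos hx.1 hw.1, (mul_le_of_le_one_right hx.1.le hw.2).trans_lt hx.2⟩
  have integrable {x : ℝ} (hx : x ∈ Ioo 0 b) :
      Integrable (fun w => f (x * w)) (volume.restrict (Ioc 0 1)) := by
    have hscaled := (hint x hx).comp_mul_left (c := x)
    rw [zero_div, div_self hx.1.ne'] at hscaled
    exact hscaled.1
  have nonneg {x : ℝ} (hx : x ∈ Ioo 0 b) :
      0 ≤ᵐ[volume.restrict (Ioc 0 1)] fun w => f (x * w) :=
    ae_restrict_of_forall_mem measurableSet_Ioc fun w hw => hf₀ _ (mul_mem hx hw)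
  intro x hx y hy
  have sqrt_mul_mul {w : ℝ} (hw : 0 ≤ w) : √(x * w * (y * w)) = √(x * y) * w := by
    rw [mul_mul_mul_comm, sqrt_mul (mul_nonneg hx.1.le hy.1.le), sqrt_mul_self hw]
  have cauchy_schwarz := sq_integral_le_of_sq_le_mul (h := fun w => f (√(x * y) * w))
    (integrable hx) (integrable hy) (nonneg hx) (nonneg hy)
    (ae_restrict_of_forall_mem measurableSet_Ioc fun w hw => by
      simpa only [sqrt_mul_mul hw.1.le] using hf (mul_mem hx hw) (mul_mem hy hw))
  have hxy : 0 ≤ x * y := mul_nonneg hx.1.le hy.1.le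
  simp only [rescale]
  rw [mul_pow, sq_sqrt hxy, mul_mul_mul_comm]
  exact mul_le_mul_of_nonneg_left cauchy_schwarz hxy

section ArcsinPQ

variable {p q x : ℝ}

theorem intervalIntegrable_one_sub_rpow_rpow (hp : 1 < p) (hq : 1 ≤ q) :
    IntervalIntegrable (fun t : ℝ => (1 - t ^ q) ^ (-(1 / p))) volume 0 1 := by
  have hexp : -1 < -(1 / p) := neg_lt_neg ((div_lt_one (one_pos.trans hp)).2 hp)
  have hmajorant : IntervalIntegrable (fun t : ℝ => (1 - t) ^ (-(1 / p))) volume 0 1 := by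
    simpa only [sub_self, sub_zero] using
      ((intervalIntegral.intervalIntegrable_rpow' (a := 0) (b := 1) hexp).comp_sub_left 1).symm
  have hmeas : Measurable fun t : ℝ => (1 - t ^ q) ^ (-(1 / p)) := by fun_prop
  rw [intervalIntegrable_iff_integrableOn_Ioo_of_le zero_le_one] at hmajorant ⊢
  refine hmajorant.mono' hmeas.aestronglyMeasurable ?_
  refine ae_restrict_of_forall_mem measurableSet_Ioo fun t ht => ?_
  have htq : t ^ q ≤ t := rpow_le_self_of_le_one ht.1.le ht.2.le hq
  have hpos : 0 < 1 - t := sub_pos.2 ht.2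
  rw [norm_of_nonneg (rpow_nonneg (by linarith) _)]
  exact rpow_le_rpow_of_nonpos hpos (by linarith) (by linarith [one_div_pos.2 (one_pos.trans hp)])

theorem continuousOn_arcsinPQ (hp : 1 < p) (hq : 1 ≤ q) :
    ContinuousOn (arcsinPQ p q) (Icc 0 1) := by
  have hint := intervalIntegrable_one_sub_rpow_rpow hp hq
  rw [← uIcc_of_le zero_le_one]
  exact intervalIntegral.continuousOn_primitive_interval' hint left_mem_uIcc

theorem rpow_mem_Ioo_zero_one {a : ℝ} (ha : 0 < a) (hx : x ∈ Ioo 0 1) : x ^ a ∈ Ioo (0 : ℝ) 1 :=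
  ⟨rpow_pos_of_pos hx.1 a, rpow_lt_one hx.1.le hx.2 ha⟩

theorem one_sub_rpow_mem_Ioo_zero_one {a : ℝ} (ha : 0 < a) (hx : x ∈ Ioo 0 1) :
    1 - x ^ a ∈ Ioo (0 : ℝ) 1 :=
  have h := rpow_mem_Ioo_zero_one ha hx
  ⟨sub_pos.2 h.2, sub_lt_self 1 h.1⟩

theorem hasDerivAt_arcsinPQ (hp : 1 < p) (hq : 1 ≤ q) (hx : x ∈ Ioo 0 1) :
    HasDerivAt (arcsinPQ p q) ((1 - x ^ q) ^ (-(1 / p))) x := by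
  have hint : IntervalIntegrable (fun t : ℝ => (1 - t ^ q) ^ (-(1 / p))) volume 0 x :=
    (intervalIntegrable_one_sub_rpow_rpow hp hq).mono_set
      (uIcc_subset_uIcc_left (Icc_subset_uIcc (Ioo_subset_Icc_self hx)))
  have hne : 1 - x ^ q ≠ 0 := (one_sub_rpow_mem_Ioo_zero_one (one_pos.trans_le hq) hx).1.ne'
  have hcont : ContinuousAt (fun t : ℝ => (1 - t ^ q) ^ (-(1 / p))) x :=
    (continuousAt_const.sub (continuousAt_id.rpow_const (Or.inl hx.1.ne'))).rpow_const (Or.inl hne)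
  have hmeas : Measurable fun t : ℝ => (1 - t ^ q) ^ (-(1 / p)) := by fun_prop
  exact intervalIntegral.integral_hasDerivAt_right hint
    hmeas.stronglyMeasurable.stronglyMeasurableAtFilter hcont

theorem arccosPQ_zero (hp : p ≠ 0) : arccosPQ p q 0 = arcsinPQ p q 1 := by
  simp only [arccosPQ, zero_rpow hp, sub_zero, one_rpow]

theorem continuousOn_arccosPQ (hp : 1 < p) (hq : 1 ≤ q) :
    ContinuousOn (arccosPQ p q) (Icc 0 1) := by
  have hp₀ : 0 ≤ p := by linarith
  have hq₀ : 0 ≤ 1 / q := by positivity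
  have hcont : Continuous fun x : ℝ => (1 - x ^ p) ^ (1 / q) :=
    (continuous_const.sub (continuous_id.rpow_const fun _ => Or.inr hp₀)).rpow_const
      fun _ => Or.inr hq₀
  refine (continuousOn_arcsinPQ hp hq).comp hcont.continuousOn fun x hx => ?_
  have hle : x ^ p ≤ 1 := rpow_le_one hx.1 hx.2 hp₀
  have hnonneg : 0 ≤ x ^ p := rpow_nonneg hx.1 p
  exact ⟨rpow_nonneg (by linarith) _, rpow_le_one (by linarith) (by linarith) hq₀⟩

/-- The derivative of `x ↦ arcsinPQ p q 1 - arccosPQ p q x` on `(0, 1)`, whose geometric convexity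
passes to that function. -/
noncomputable def arccosPQDensity (p q x : ℝ) : ℝ :=
  p / q * x ^ (p - 2) * (1 - x ^ p) ^ (1 / q - 1)

theorem arccosPQDensity_nonneg (hp : 0 < p) (hq : 0 ≤ q) (hx : x ∈ Ioo 0 1) :
    0 ≤ arccosPQDensity p q x :=
  mul_nonneg (mul_nonneg (div_nonneg hp.le hq) (rpow_nonneg hx.1.le _))
    (rpow_nonneg (one_sub_rpow_mem_Ioo_zero_one hp hx).1.le _)

theorem geomConvexOn_arccosPQDensity (hp : 0 < p) (hq : 1 ≤ q) :
    GeomConvexOn (Ioo 0 1) (arccosPQDensity p q) := by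
  have hexp : 1 / q - 1 ≤ 0 := sub_nonpos.2 ((div_le_one (one_pos.trans_le hq)).2 hq)
  have hpow : GeomConvexOn (Ioo 0 1) fun x => x ^ (p - 2) :=
    (geomConvexOn_rpow _).mono fun _ hx => hx.1.le
  have hone_sub : GeomConvexOn (Ioo 0 1) fun x => (1 - x ^ p) ^ (1 / q - 1) :=
    (geomConvexOn_one_sub_rpow_of_nonpos hexp).comp_rpow (fun _ hx => hx.1.le)
      fun _ => rpow_mem_Ioo_zero_one hp
  exact ((GeomConvexOn.const (p / q)).mul hpow).mul hone_sub

theorem hasDerivAt_arccosPQ (hp : 1 < p) (hq : 1 ≤ q) (hx : x ∈ Ioo 0 1) :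
    HasDerivAt (arccosPQ p q) (-arccosPQDensity p q x) x := by
  have hp₀ : 0 < p := one_pos.trans hp
  have hq₀ : 0 < q := one_pos.trans_le hq
  have hmem := one_sub_rpow_mem_Ioo_zero_one hp₀ hx
  have hinner : HasDerivAt (fun x : ℝ => (1 - x ^ p) ^ (1 / q))
      (-(p * x ^ (p - 1)) * (1 / q) * (1 - x ^ p) ^ (1 / q - 1)) x :=
    ((hasDerivAt_rpow_const (Or.inl hx.1.ne')).const_sub 1).rpow_const (Or.inl hmem.1.ne')
  have houter : HasDerivAt (arcsinPQ p q) x⁻¹ ((1 - x ^ p) ^ (1 / q)) := by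
    refine (hasDerivAt_arcsinPQ hp hq
      (rpow_mem_Ioo_zero_one (one_div_pos.2 hq₀) hmem)).congr_deriv ?_
    rw [← rpow_mul hmem.1.le, one_div_mul_cancel hq₀.ne', rpow_one, sub_sub_cancel,
      ← rpow_mul hx.1.le, mul_neg, mul_one_div_cancel hp₀.ne', rpow_neg_one]
  refine (houter.comp x hinner).congr_deriv ?_
  have hpow : x ^ (p - 2) = x⁻¹ * x ^ (p - 1) := by
    rw [← rpow_neg_one, ← rpow_add hx.1]
    ring_nf
  rw [arccosPQDensity, hpow]
  ring

theorem intervalIntegrable_arccosPQDensity (hp : 1 < p) (hq : 1 ≤ q) (hx : x ∈ Icc 0 1) :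
    IntervalIntegrable (arccosPQDensity p q) volume 0 x := by
  have hsub : Ioo (min 0 x) (max 0 x) ⊆ Ioo 0 1 := by
    rw [min_eq_left hx.1, max_eq_right hx.1]
    exact Ioo_subset_Ioo_right hx.2
  have hcont : ContinuousOn (-arccosPQ p q) (uIcc 0 x) := by
    rw [uIcc_of_le hx.1]
    exact ((continuousOn_arccosPQ hp hq).mono (Icc_subset_Icc_right hx.2)).neg
  exact intervalIntegral.intervalIntegrable_deriv_of_nonneg hcont
    (fun t ht => (hasDerivAt_arccosPQ hp hq (hsub ht)).neg.congr_deriv (neg_neg _))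
    fun t ht => arccosPQDensity_nonneg (one_pos.trans hp) (zero_le_one.trans hq) (hsub ht)

theorem integral_arccosPQDensity (hp : 1 < p) (hq : 1 ≤ q) (hx : x ∈ Icc 0 1) :
    ∫ t in 0..x, arccosPQDensity p q t = arcsinPQ p q 1 - arccosPQ p q x := by
  have ftc : ∫ t in 0..x, -arccosPQDensity p q t = arccosPQ p q x - arccosPQ p q 0 :=
    intervalIntegral.integral_eq_sub_of_hasDerivAt_of_le hx.1
      ((continuousOn_arccosPQ hp hq).mono (Icc_subset_Icc_right hx.2))
      (fun t ht => hasDerivAt_arccosPQ hp hq (Ioo_subset_Ioo_right hx.2 ht))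
      (intervalIntegrable_arccosPQDensity hp hq hx).neg
  rw [intervalIntegral.integral_neg, arccosPQ_zero (one_pos.trans hp).ne'] at ftc
  linarith

theorem geomConvexOn_arcsinPQ_one_sub_arccosPQ (hp : 1 < p) (hq : 1 ≤ q) :
    GeomConvexOn (Ioo 0 1) fun x => arcsinPQ p q 1 - arccosPQ p q x := by
  have hp₀ : 0 < p := one_pos.trans hp
  have hprimitive : GeomConvexOn (Ioo 0 1) fun x => ∫ t in 0..x, arccosPQDensity p q t :=
    (geomConvexOn_arccosPQDensity hp₀ hq).integral
      (fun x => arccosPQDensity_nonneg hp₀ (zero_le_one.trans hq))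
      fun x hx => intervalIntegrable_arccosPQDensity hp hq (Ioo_subset_Icc_self hx)
  have hintegral {x : ℝ} (hx : x ∈ Ioo 0 1) :
      ∫ t in 0..x, arccosPQDensity p q t = arcsinPQ p q 1 - arccosPQ p q x :=
    integral_arccosPQDensity hp hq (Ioo_subset_Icc_self hx)
  intro x hx y hy
  simpa only [hintegral hx, hintegral hy, hintegral (sqrt_mul_mem_Ioo_zero hx hy)] using
    hprimitive hx hy

end ArcsinPQ

theorem pi_sub_arccosPQ_geom_convex (p q : ℝ) (hp : 1 < p) (hq : 1 < q)
    (r s : ℝ) (hr : r ∈ Set.Ioo (0:ℝ) 1) (hs : s ∈ Set.Ioo (0:ℝ) 1) :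
    arcsinPQ p q 1 - arccosPQ p q (Real.sqrt (r * s)) ≤
      Real.sqrt ((arcsinPQ p q 1 - arccosPQ p q r) * (arcsinPQ p q 1 - arccosPQ p q s)) :=
  le_sqrt_of_sq_le (geomConvexOn_arcsinPQ_one_sub_arccosPQ hp hq.le hr hs)
end
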